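/- Let p be a prime, V a p-torsion-free valuation domain of Krull dimension 1 that is Witt-perfect and admits a compatible system of p-power roots p^{1/p^n} ∈ V, and A a p-torsion-free flat V-algebra with a nonzero divisor g ∈ A admitting a compatible system of p-power roots g^{1/p^n} ∈ A. Assume: (1) p lies in the Jacobson radical of A and A is completely integrally closed in A[1/p]; (2) A is (pg)^{1/p^∞}-almost Witt-perfect and is integral over a Noetherian subring; (3) (p,g) is a regular sequence on A. For each j > 0 let A[(p^j/g)^{1/p^∞}] denote the A-subalgebra of A[1/(pg)] generated by the elements (p^{1/p^n})^j·(g^{1/p^n})^{-1} for all n ≥ 0. Then for each j > 0 the inclusion A[(p^j/g)^{1/p^∞}] ⊆ A^{j∘} is a (pg)^{1/p^∞}-almost isomorphism: A[(p^j/g)^{1/p^∞}] ⊆ A^{j∘} and (pg)^{1/p^n}·A^{j∘} ⊆ A[(p^j/g)^{1/p^∞}] for every n > 0. -/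

import Mathlib

/-- An element `x` of an `R`-algebra `B` is almost integral over `R` if all its powers lie in a
single finitely generated `R`-submodule of `B`. -/
def IsAlmostIntegralElem (R : Type*) {B : Type*} [CommRing R] [CommRing B] [Algebra R B]
    (x : B) : Prop :=
  ∃ M : Submodule R B, M.FG ∧ ∀ n : ℕ, x ^ n ∈ M

/-- `R` is completely integrally closed in the `R`-algebra `B` if every element of `B` that is
almost integral over `R` lies in the image of `R`. -/
def IsCompletelyIntegrallyClosedIn (R B : Type*) [CommRing R] [CommRing B] [Algebra R B] : Prop :=
  ∀ x : B, IsAlmostIntegralElem R x → x ∈ (algebraMap R B).range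

/-- A `p`-torsion-free ring `A` is Witt-perfect if the Frobenius endomorphism of `A/pA` is
surjective and for every `a ∈ A` there is `b ∈ A` with `b^p ≡ p·a (mod p²A)`. -/
def IsWittPerfect (p : ℕ) (A : Type*) [CommRing A] : Prop :=
  (∀ a : A, ∃ b c : A, a - b ^ p = p * c) ∧
  (∀ a : A, ∃ b c : A, b ^ p - p * a = (p : A) ^ 2 * c)

/-- `(pg)^{1/p^∞}`-almost Witt-perfectness, where `pga n` denotes
`(pg)^{1/p^n} = p^{1/p^n}·g^{1/p^n}`. -/
def IsAlmostWittPerfect (p : ℕ) {A : Type*} [CommRing A] (pga : ℕ → A) : Prop :=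
  (∀ a : A, ∀ n : ℕ, 0 < n → ∃ b c : A, pga n * a - b ^ p = p * c) ∧
  (∀ a : A, ∀ n : ℕ, 0 < n → ∃ b c : A, b ^ p - p * (pga n * a) = (p : A) ^ 2 * c)

/-!
Write `w n` and `g n` for the chosen roots of `p` and `g`, `t n = w n ^ j / g n` and
`S = ⋃ n, A[t n]`. Since `(p, g)` is regular, `A[t n] = A[X]/(g n * X - w n ^ j)`, so Frobenius
`S/(w 1) → S/(p)` is a colimit of base changes of Frobenius `A/(w 1) → A/(p)`. The latter is
injective, because `A` is integrally closed in `A[1/p]`, and almost surjective, and this makes the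
former almost injective: if `w 1 * x ∈ S` and `x ^ p ∈ S`, then `x` is almost in `S`. Inductively,
a power-bounded `x` with `x ^ p ^ n ∈ S` is almost in `S`. Now if `p ^ m * x ^ k ∈ S` for all `k`,
then `w n ^ m * x` is such a `p ^ n`-th root for every `n`; letting `n` grow, `x` itself is almost
in `S`. That `S` is power-bounded over `A[t 0]` holds because `p ^ j * t n ^ r ∈ A[t 0]` for
`r < p ^ n`.
-/

section PowRootSystem

/-- A compatible system of `p`-power roots of `x 0`, the element `x n` being `(x 0)^{1/p^n}`. -/
def IsPowRootSystem {M : Type*} [Monoid M] (p : ℕ) (x : ℕ → M) : Prop :=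
  ∀ n, x (n + 1) ^ p = x n

namespace IsPowRootSystem

section Monoid

variable {M : Type*} [Monoid M] {p : ℕ} {x : ℕ → M}

theorem pow_pow_eq (hx : IsPowRootSystem p x) (n l : ℕ) : x (n + l) ^ p ^ l = x n := by
  induction l with
  | zero => simp
  | succ l ih => rw [pow_succ', pow_mul, ← add_assoc, hx, ih]

theorem pow_pow_eq_zero (hx : IsPowRootSystem p x) (n : ℕ) : x n ^ p ^ n = x 0 := by
  simpa using hx.pow_pow_eq 0 n

theorem map {N F : Type*} [Monoid N] [FunLike F M N] [MonoidHomClass F M N]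
    (hx : IsPowRootSystem p x) (f : F) : IsPowRootSystem p fun n ↦ f (x n) :=
  fun n ↦ by rw [← map_pow, hx]

end Monoid

variable {M : Type*} [CommMonoid M] {p : ℕ} {x y : ℕ → M}

theorem mul (hx : IsPowRootSystem p x) (hy : IsPowRootSystem p y) :
    IsPowRootSystem p fun n ↦ x n * y n :=
  fun n ↦ by rw [mul_pow, hx, hy]

theorem isUnit (hx : IsPowRootSystem p x) (hp : p ≠ 0) (hx0 : IsUnit (x 0)) (n : ℕ) :
    IsUnit (x n) :=
  (isUnit_pow_iff (pow_ne_zero n hp)).1 (by rwa [hx.pow_pow_eq_zero])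

theorem pow_dvd (hx : IsPowRootSystem p x) (n : ℕ) {l m : ℕ} (hm : m ≤ p ^ l) :
    x (n + l) ^ m ∣ x n :=
  hx.pow_pow_eq n l ▸ pow_dvd_pow _ hm

end IsPowRootSystem

end PowRootSystem

section AlmostElements

variable {A M : Type*} [CommSemiring A] [AddCommMonoid M] [Module A M]
  {N : Submodule A M} {p : ℕ} {q : ℕ → A} {x : M}

theorem smul_mem_of_dvd {a b : A} (hab : a ∣ b) (hx : a • x ∈ N) : b • x ∈ N := by
  obtain ⟨c, rfl⟩ := hab
  rw [mul_comm, mul_smul]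
  exact N.smul_mem c hx

/-- The submodule of the elements almost in `N`, with respect to the sequence `q` (which is
meant to be a system of `p`-power roots). -/
def almostElements (q : ℕ → A) (N : Submodule A M) : Submodule A M :=
  ⨅ n, N.comap (LinearMap.lsmul A M (q n))

theorem mem_almostElements : x ∈ almostElements q N ↔ ∀ n, q n • x ∈ N := by
  simp [almostElements]

theorem le_almostElements : N ≤ almostElements q N :=
  fun _ hx ↦ mem_almostElements.2 fun n ↦ N.smul_mem (q n) hx

theorem mem_almostElements_of_forall_succ (hp : p ≠ 0) (hq : IsPowRootSystem p q)
    (h : ∀ n, q (n + 1) • x ∈ N) : x ∈ almostElements q N :=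
  mem_almostElements.2 fun n ↦ smul_mem_of_dvd (hq n ▸ dvd_pow_self _ hp) (h n)

theorem mem_almostElements_of_forall_smul_mem (hp : 2 ≤ p) (hq : IsPowRootSystem p q)
    (h : ∀ n, q n • x ∈ almostElements q N) : x ∈ almostElements q N := by
  refine mem_almostElements.2 fun n ↦ smul_mem_of_dvd (a := q (n + 1) ^ 2) ?_ ?_
  · exact hq n ▸ pow_dvd_pow _ hp
  · rw [pow_two, mul_smul]
    exact mem_almostElements.1 (h (n + 1)) (n + 1)

end AlmostElements

section PowerBounded

variable {A B : Type*} [CommRing A] [CommRing B] [Algebra A B] {S T : Subalgebra A B} {a : A}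
  {x : B}

/-- `x` is power-bounded over `S` for the `a`-adic topology. With `S = A[p^j/g]` and `a = p`, such
elements make up `A^{j∘}`. -/
def IsPowerBounded (a : A) (S : Subalgebra A B) (x : B) : Prop :=
  ∃ m : ℕ, ∀ n : ℕ, a ^ m • x ^ n ∈ S

namespace IsPowerBounded

theorem mono (hST : S ≤ T) : IsPowerBounded a S x → IsPowerBounded a T x :=
  fun ⟨m, hm⟩ ↦ ⟨m, fun n ↦ hST (hm n)⟩

theorem pow (hx : IsPowerBounded a S x) (k : ℕ) : IsPowerBounded a S (x ^ k) :=
  hx.imp fun _ hm n ↦ by simpa only [← pow_mul] using hm (k * n)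

theorem smul (hx : IsPowerBounded a S x) (b : A) : IsPowerBounded a S (b • x) :=
  hx.imp fun _ hm n ↦ by
    rw [smul_pow, smul_comm]
    exact S.smul_mem (hm n) _

end IsPowerBounded

variable {p : ℕ} {q w : ℕ → A}

theorem mem_almostElements_of_pow_smul_mem (hp : 2 ≤ p) (hq : IsPowRootSystem p q)
    (hS : ∀ x, a • x ∈ S → x ^ p ∈ S → x ∈ almostElements q S.toSubmodule) {m : ℕ}
    (hm : a ^ m • x ∈ S) (hxp : x ^ p ∈ S) : x ∈ almostElements q S.toSubmodule := by
  have smul_pow_mem {b : A} {y : B} (hy : y ^ p ∈ S) : (b • y) ^ p ∈ S :=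
    smul_pow b y p ▸ S.smul_mem hy _
  induction m generalizing x with
  | zero => exact le_almostElements (by simpa using hm)
  | succ m ih =>
    rw [pow_succ', mul_smul] at hm
    have hmx := mem_almostElements.1 (hS _ hm (smul_pow_mem hxp))
    refine mem_almostElements_of_forall_smul_mem hp hq fun k ↦ ih ?_ (smul_pow_mem hxp)
    rw [smul_comm]
    exact hmx k

theorem IsPowerBounded.mem_almostElements_of_pow_mem (hp : 2 ≤ p) (hq : IsPowRootSystem p q)
    (hw : IsPowRootSystem p w)
    (hS : ∀ x, w 1 • x ∈ S → x ^ p ∈ S → x ∈ almostElements q S.toSubmodule)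
    (hx : IsPowerBounded (w 0) S x) (hxp : x ^ p ∈ S) : x ∈ almostElements q S.toSubmodule := by
  obtain ⟨m, hm⟩ := hx
  refine mem_almostElements_of_pow_smul_mem hp hq hS (m := p * m) ?_ hxp
  simpa [pow_mul, hw 0] using hm 1

theorem IsPowerBounded.mem_almostElements_of_pow_pow_mem (hp : 2 ≤ p) (hq : IsPowRootSystem p q)
    (hw : IsPowRootSystem p w)
    (hS : ∀ x, w 1 • x ∈ S → x ^ p ∈ S → x ∈ almostElements q S.toSubmodule)
    (hx : IsPowerBounded (w 0) S x) {n : ℕ} (hxn : x ^ p ^ n ∈ S) :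
    x ∈ almostElements q S.toSubmodule := by
  induction n generalizing x with
  | zero => exact le_almostElements (by simpa using hxn)
  | succ n ih =>
    have hxp : x ^ p ∈ almostElements q S.toSubmodule :=
      ih (hx.pow p) (by rwa [← pow_mul, ← pow_succ'])
    refine mem_almostElements_of_forall_smul_mem hp hq <| mem_almostElements.1 <|
      mem_almostElements_of_forall_succ (by lia) hq fun k ↦ ?_
    refine (hx.smul (q (k + 1))).mem_almostElements_of_pow_mem hp hq hw hS ?_
    rw [smul_pow, hq]
    exact mem_almostElements.1 hxp k

theorem IsPowerBounded.mem_almostElements (hp : 2 ≤ p) (hq : IsPowRootSystem p q)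
    (hw : IsPowRootSystem p w) (hwq : ∀ n, w n ∣ q n)
    (hS : ∀ x, w 1 • x ∈ S → x ^ p ∈ S → x ∈ almostElements q S.toSubmodule)
    (hx : IsPowerBounded (w 0) S x) : x ∈ almostElements q S.toSubmodule := by
  obtain ⟨m, hm⟩ := id hx
  have smul_mem (n : ℕ) : w n ^ m • x ∈ almostElements q S.toSubmodule := by
    refine (hx.smul _).mem_almostElements_of_pow_pow_mem hp hq hw hS (n := n) ?_
    rw [smul_pow, pow_right_comm, hw.pow_pow_eq_zero]
    exact hm _
  refine mem_almostElements_of_forall_smul_mem hp hq fun k ↦ smul_mem_of_dvd ?_ (smul_mem (k + m))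
  exact (hw.pow_dvd k (Nat.lt_pow_self hp).le).trans (hwq k)

end PowerBounded

section RegularModulo

variable {A : Type*} [CommRing A] {a b u : A}

theorem isSMulRegular_quotient_span_singleton_iff :
    IsSMulRegular (A ⧸ Ideal.span {a}) u ↔ ∀ x, a ∣ u * x → a ∣ x := by
  simp only [isSMulRegular_quotient_iff_mem_of_smul_mem, Ideal.mem_span_singleton, smul_eq_mul]

theorem isSMulRegular_quotient_span_mul (ha : IsLeftRegular a)
    (hau : IsSMulRegular (A ⧸ Ideal.span {a}) u) (hbu : IsSMulRegular (A ⧸ Ideal.span {b}) u) :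
    IsSMulRegular (A ⧸ Ideal.span {a * b}) u := by
  rw [isSMulRegular_quotient_span_singleton_iff] at *
  intro x hx
  obtain ⟨y, rfl⟩ := hau x (dvd_of_mul_right_dvd hx)
  rw [mul_left_comm, ha.dvd_cancel_left] at hx
  exact mul_dvd_mul_left a (hbu y hx)

theorem isSMulRegular_quotient_span_pow (ha : IsLeftRegular a)
    (hau : IsSMulRegular (A ⧸ Ideal.span {a}) u) (n : ℕ) :
    IsSMulRegular (A ⧸ Ideal.span {a ^ n}) u := by
  induction n with
  | zero => simp [isSMulRegular_quotient_span_singleton_iff]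
  | succ n ih => exact pow_succ' a n ▸ isSMulRegular_quotient_span_mul ha hau ih

theorem isSMulRegular_quotient_span_of_mul (ha : IsLeftRegular a)
    (hu : IsSMulRegular (A ⧸ Ideal.span {a * b}) u) : IsSMulRegular (A ⧸ Ideal.span {b}) u := by
  rw [isSMulRegular_quotient_span_singleton_iff] at *
  intro x hx
  rw [← ha.dvd_cancel_left]
  exact hu _ (by simpa only [mul_left_comm u] using mul_dvd_mul_left a hx)

theorem IsPowRootSystem.isSMulRegular_quotient_span_pow {p : ℕ} {w v : ℕ → A} (hp : p ≠ 0)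
    (hw : IsPowRootSystem p w) (hv : IsPowRootSystem p v) (hw0 : IsLeftRegular (w 0))
    (hreg : IsSMulRegular (A ⧸ Ideal.span {w 0}) (v 0)) (j n : ℕ) :
    IsSMulRegular (A ⧸ Ideal.span {w n ^ j}) (v n) := by
  have hpn : p ^ n ≠ 0 := pow_ne_zero n hp
  have hwn : IsLeftRegular (w n) :=
    (IsLeftRegular.pow_iff (Nat.pos_of_ne_zero hpn)).1 (hw.pow_pow_eq_zero n ▸ hw0)
  have hw0j : w 0 ^ j = (w n ^ j) ^ (p ^ n - 1) * w n ^ j := by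
    rw [pow_sub_one_mul hpn, pow_right_comm, hw.pow_pow_eq_zero]
  refine (IsSMulRegular.pow_iff (Nat.pos_of_ne_zero hpn)).1 ?_
  rw [hv.pow_pow_eq_zero]
  refine isSMulRegular_quotient_span_of_mul ((hwn.pow j).pow (p ^ n - 1)) ?_
  rw [← hw0j]
  exact _root_.isSMulRegular_quotient_span_pow hw0 hreg j

end RegularModulo

section Polynomial

open Polynomial

section Fraction

variable {A B : Type*} [CommRing A] [CommRing B] [Algebra A B] {u v : A} {t : B}

theorem exists_pow_smul_aeval_eq_algebraMap (ht : u • t = algebraMap A B v) (P : A[X]) :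
    ∃ (n : ℕ) (a : A), u ^ n • aeval t P = algebraMap A B a := by
  induction P using Polynomial.induction_on' with
  | add P Q hP hQ =>
    obtain ⟨n, a, hP⟩ := hP
    obtain ⟨m, b, hQ⟩ := hQ
    refine ⟨n + m, u ^ m * a + u ^ n * b, ?_⟩
    simp only [map_add, map_mul, ← hP, ← hQ, ← Algebra.smul_def]
    module
  | monomial n a =>
    refine ⟨n, a * v ^ n, ?_⟩
    rw [aeval_monomial, ← mul_smul_comm, ← _root_.smul_pow, ht, map_mul, map_pow]

theorem dvd_coeff_zero_of_aeval_eq_zero (hinj : Function.Injective (algebraMap A B))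
    (ht : u • t = algebraMap A B v) (hreg : IsSMulRegular (A ⧸ Ideal.span {v}) u) {P : A[X]}
    (hP : aeval t P = 0) : v ∣ P.coeff 0 := by
  obtain ⟨n, a, ha⟩ := exists_pow_smul_aeval_eq_algebraMap ht P.divX
  refine isSMulRegular_quotient_span_singleton_iff.1 (hreg.pow (n + 1)) _ ⟨-a, hinj ?_⟩
  rw [← P.divX_mul_X_add] at hP
  simp only [map_add, map_mul, aeval_X, aeval_C] at hP
  simp only [Algebra.smul_def, map_pow] at ha ht
  simp only [map_mul, map_pow, map_neg, ← ha, ← ht]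
  linear_combination (algebraMap A B u) ^ (n + 1) * hP

theorem C_mul_X_sub_C_dvd_of_aeval_eq_zero (hinj : Function.Injective (algebraMap A B))
    (htu : IsLeftRegular t) (ht : u • t = algebraMap A B v)
    (hreg : IsSMulRegular (A ⧸ Ideal.span {v}) u) {P : A[X]} (hP : aeval t P = 0) :
    C u * X - C v ∣ P := by
  induction hd : P.natDegree generalizing P with
  | zero =>
    rw [eq_C_of_natDegree_eq_zero hd] at hP ⊢
    rw [aeval_C, map_eq_zero_iff _ hinj] at hP
    rw [hP, C_0]
    exact dvd_zero _
  | succ d ih =>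
    obtain ⟨c, hc⟩ := dvd_coeff_zero_of_aeval_eq_zero hinj ht hreg hP
    -- Adding `(u * X - v) * c` to `P` kills the constant term, so a factor `X` can be cancelled.
    have hPc : P = P.divX * X + C v * C c := by rw [← C_mul, ← hc, divX_mul_X_add]
    have hdeg : (P.divX + C (u * c)).natDegree = d := by
      rw [natDegree_add_C, natDegree_divX_eq_natDegree_tsub_one, hd, Nat.add_sub_cancel]
    have haeval : aeval t (P.divX + C (u * c)) = 0 := by
      refine htu.mul_left_eq_zero_iff.1 ?_
      apply_fun aeval t at hPc
      rw [hP] at hPc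
      simp only [map_add, map_mul, aeval_X, aeval_C, ← ht, Algebra.smul_def] at hPc ⊢
      linear_combination -hPc
    obtain ⟨Q, hQ⟩ := ih haeval hdeg
    rw [C_mul] at hQ
    exact ⟨X * Q - C c, by linear_combination hPc + X * hQ⟩

theorem aeval_eq_zero_iff_C_mul_X_sub_C_dvd (hinj : Function.Injective (algebraMap A B))
    (htu : IsLeftRegular t) (ht : u • t = algebraMap A B v)
    (hreg : IsSMulRegular (A ⧸ Ideal.span {v}) u) {P : A[X]} :
    aeval t P = 0 ↔ C u * X - C v ∣ P := by
  refine ⟨C_mul_X_sub_C_dvd_of_aeval_eq_zero hinj htu ht hreg, ?_⟩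
  rintro ⟨Q, rfl⟩
  simp [← ht, Algebra.smul_def]

theorem pow_smul_pow_eq (ht : u • t = algebraMap A B v) {r n : ℕ} (hr : r ≤ n) :
    v ^ n • t ^ r = (v ^ r * u ^ (n - r)) • t ^ n := by
  obtain ⟨k, rfl⟩ := Nat.exists_eq_add_of_le hr
  simp only [Algebra.smul_def, map_mul, map_pow, Nat.add_sub_cancel_left] at ht ⊢
  rw [pow_add, ← ht]
  ring

theorem pow_smul_mem_adjoin_pow (ht : u • t = algebraMap A B v) {n : ℕ} (hn : n ≠ 0) {x : B}
    (hx : x ∈ Algebra.adjoin A {t}) : v ^ n • x ∈ Algebra.adjoin A {t ^ n} := by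
  obtain ⟨F, rfl⟩ := Algebra.adjoin_mem_exists_aeval A t hx
  clear hx
  have htn : t ^ n ∈ Algebra.adjoin A {t ^ n} := Algebra.self_mem_adjoin_singleton A _
  induction F using Polynomial.induction_on' with
  | add P Q hP hQ => rw [map_add, smul_add]; exact add_mem hP hQ
  | monomial i a =>
    have hi : i % n ≤ n := (Nat.mod_lt i (Nat.pos_of_ne_zero hn)).le
    rw [aeval_monomial, ← Nat.div_add_mod i n, pow_add, pow_mul, ← mul_smul_comm, ← mul_smul_comm,
      pow_smul_pow_eq ht hi]
    exact mul_mem (Subalgebra.algebraMap_mem _ a)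
      (mul_mem (pow_mem htn _) (Subalgebra.smul_mem _ htn _))

end Fraction

section Frobenius

theorem expChar_quotient_span_singleton {A : Type*} [CommRing A] {p : ℕ} {a : A} (hp : p.Prime)
    (hap : a ∣ p) (ha : ¬IsUnit a) : ExpChar (A ⧸ Ideal.span {a}) p := by
  have : Nontrivial (A ⧸ Ideal.span {a}) := by simpa using ha
  have : CharP (A ⧸ Ideal.span {a}) p := (CharP.charP_iff_prime_eq_zero hp).2
    (by rwa [← map_natCast (Ideal.Quotient.mk _), Ideal.Quotient.eq_zero_iff_dvd])
  exact ExpChar.prime hp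

/-- The `p`-th power map `A → A/(a)`, which is a ring homomorphism when `p ∈ (a)`. -/
abbrev frobeniusMod {A : Type*} [CommRing A] (p : ℕ) (a : A) [ExpChar (A ⧸ Ideal.span {a}) p] :
    A →+* A ⧸ Ideal.span {a} :=
  (frobenius (A ⧸ Ideal.span {a}) p).comp (Ideal.Quotient.mk (Ideal.span {a}))

variable {A : Type*} [CommRing A] {p : ℕ} {a : A}

theorem frobeniusMod_apply [ExpChar (A ⧸ Ideal.span {a}) p] (x : A) :
    frobeniusMod p a x = Ideal.Quotient.mk (Ideal.span {a}) (x ^ p) := by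
  simp [frobenius_def]

theorem frobeniusMod_eq_zero_iff [ExpChar (A ⧸ Ideal.span {a}) p] {x : A} :
    frobeniusMod p a x = 0 ↔ a ∣ x ^ p := by
  rw [frobeniusMod_apply, Ideal.Quotient.eq_zero_iff_dvd]

theorem C_dvd_of_map_eq_zero {R : Type*} [CommRing R] {φ : A →+* R} (hφ : ∀ x, φ x = 0 → a ∣ x)
    {P : A[X]} (hP : P.map φ = 0) : C a ∣ P :=
  (C_dvd_iff_dvd_coeff a P).2 fun i ↦ hφ _ (by rw [← coeff_map, hP, coeff_zero])

theorem exists_pow_eq_expand_add_C_mul [ExpChar (A ⧸ Ideal.span {a}) p] (F : A[X]) :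
    ∃ G H : A[X], F ^ p = expand A p G + C a * H ∧
      G.map (Ideal.Quotient.mk (Ideal.span {a})) = F.map (frobeniusMod p a) := by
  obtain ⟨G, hG⟩ := map_surjective _ Ideal.Quotient.mk_surjective (F.map (frobeniusMod p a))
  have hFG : C a ∣ F ^ p - expand A p G := by
    refine C_dvd_of_map_eq_zero (φ := Ideal.Quotient.mk (Ideal.span {a}))
      (fun x ↦ (Ideal.Quotient.eq_zero_iff_dvd a x).1) ?_
    rw [Polynomial.map_sub, Polynomial.map_pow, map_expand, hG, ← map_map, ← map_frobenius_expand p,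
      map_expand, sub_self]
  obtain ⟨H, hH⟩ := hFG
  exact ⟨G, H, sub_eq_iff_eq_add'.1 hH, hG⟩

theorem exists_C_mul_eq_mul_add_C_mul {R : Type*} [CommRing R] {φ : A →+* R} {c : A}
    (hφ : ∀ x, φ x = 0 → a ∣ x) (hc : ∀ r, φ c * r ∈ φ.range) {F L : A[X]}
    (hFL : L.map φ ∣ F.map φ) : ∃ D E : A[X], C c * F = L * D + C a * E := by
  obtain ⟨Q, hQ⟩ := hFL
  obtain ⟨D, hD⟩ : C (φ c) * Q ∈ (mapRingHom φ).range :=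
    (mem_map_range φ).2 fun i ↦ by simpa only [coeff_C_mul] using hc (Q.coeff i)
  rw [coe_mapRingHom] at hD
  have hdvd : C a ∣ C c * F - L * D := by
    refine C_dvd_of_map_eq_zero hφ ?_
    rw [Polynomial.map_sub, Polynomial.map_mul, Polynomial.map_mul, map_C, hD, hQ]
    ring
  obtain ⟨E, hE⟩ := hdvd
  exact ⟨D, E, sub_eq_iff_eq_add'.1 hE⟩

end Frobenius

section Tower

variable {A B : Type*} [CommRing A] [CommRing B] [Algebra A B] {p : ℕ} {t : ℕ → B} {x y : B}

theorem IsPowRootSystem.monotone_adjoin_singleton (ht : IsPowRootSystem p t) :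
    Monotone fun n ↦ Algebra.adjoin A {t n} := by
  refine monotone_nat_of_le_succ fun n ↦ Algebra.adjoin_singleton_le ?_
  rw [← ht n]
  exact pow_mem (Algebra.self_mem_adjoin_singleton A _) _

theorem IsPowRootSystem.mem_adjoin_range_iff (ht : IsPowRootSystem p t) :
    x ∈ Algebra.adjoin A (Set.range t) ↔ ∃ n, x ∈ Algebra.adjoin A {t n} := by
  rw [← Set.iUnion_singleton_eq_range, Algebra.adjoin_iUnion, ← SetLike.mem_coe,
    Subalgebra.coe_iSup_of_directed ht.monotone_adjoin_singleton.directed_le, Set.mem_iUnion]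
  rfl

theorem aeval_mem_adjoin_range (F : A[X]) (n : ℕ) :
    aeval (t n) F ∈ Algebra.adjoin A (Set.range t) :=
  Algebra.adjoin_mono (Set.singleton_subset_iff.2 (Set.mem_range_self n))
    (aeval_mem_adjoin_singleton A (t n))

theorem IsPowRootSystem.aeval_expand_pow (ht : IsPowRootSystem p t) (F : A[X]) (n l : ℕ) :
    aeval (t (n + l)) (expand A (p ^ l) F) = aeval (t n) F := by
  rw [expand_aeval, ht.pow_pow_eq]

theorem IsPowRootSystem.exists_aeval_eq_of_mem_adjoin_range (ht : IsPowRootSystem p t)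
    (hx : x ∈ Algebra.adjoin A (Set.range t)) (n : ℕ) :
    ∃ (l : ℕ) (F : A[X]), aeval (t (n + l)) F = x := by
  obtain ⟨l, hl⟩ := ht.mem_adjoin_range_iff.1 hx
  obtain ⟨F, hF⟩ := Algebra.adjoin_mem_exists_aeval A (t (n + l))
    (ht.monotone_adjoin_singleton (Nat.le_add_left l n) hl)
  exact ⟨l, F, hF⟩

theorem IsPowRootSystem.exists_map_dvd_map_frobeniusMod {a : A} [ExpChar (A ⧸ Ideal.span {a}) p]
    (ht : IsPowRootSystem p t) {L : ℕ → A[X]} (hL : ∀ n P, aeval (t n) P = 0 → L n ∣ P)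
    (hx : x ∈ Algebra.adjoin A (Set.range t)) (hy : y ∈ Algebra.adjoin A (Set.range t))
    (hxy : x ^ p = a • y) :
    ∃ (m : ℕ) (F : A[X]), aeval (t (m + 1)) F = x ∧
      (L m).map (Ideal.Quotient.mk (Ideal.span {a})) ∣ F.map (frobeniusMod p a) := by
  obtain ⟨n, F, rfl⟩ := ht.exists_aeval_eq_of_mem_adjoin_range hx 1
  rw [Nat.add_comm] at hxy ⊢
  obtain ⟨G, H, hGH, hG⟩ := exists_pow_eq_expand_add_C_mul (p := p) (a := a) F
  obtain ⟨l, Y, hY⟩ := ht.exists_aeval_eq_of_mem_adjoin_range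
    (sub_mem hy (aeval_mem_adjoin_range H (n + 1))) n
  refine ⟨n + l, expand A (p ^ l) F, ?_, ?_⟩
  · rw [Nat.add_right_comm, ht.aeval_expand_pow]
  have hGt : aeval (t n) G = a • aeval (t (n + l)) Y := by
    rw [hY, smul_sub, ← hxy, ← map_pow, hGH, map_add, map_mul, aeval_C, expand_aeval, ht,
      Algebra.smul_def, add_sub_cancel_right]
  have hdvd : L (n + l) ∣ expand A (p ^ l) G - C a * Y := by
    refine hL _ _ ?_
    rw [map_sub, ht.aeval_expand_pow, hGt, map_mul, aeval_C, Algebra.smul_def, sub_self]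
  rw [map_expand, ← hG, ← map_expand]
  simpa using Polynomial.map_dvd (Ideal.Quotient.mk (Ideal.span {a})) hdvd

theorem IsPowRootSystem.mem_almostElements_of_smul_mem_of_pow_mem {a b : A} {q : ℕ → A}
    [ExpChar (A ⧸ Ideal.span {a}) p] (ht : IsPowRootSystem p t) (hq : IsPowRootSystem p q)
    {L : ℕ → A[X]} (hL : ∀ n P, aeval (t n) P = 0 ↔ L n ∣ P)
    (hLφ : ∀ n, (L (n + 1)).map (frobeniusMod p a) = (L n).map (Ideal.Quotient.mk _))
    (hba : b ^ p = a) (hb : IsSMulRegular B b) (hroot : ∀ c, a ∣ c ^ p → b ∣ c)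
    (hsurj : ∀ n r, Ideal.Quotient.mk _ (q n) * r ∈ (frobeniusMod p a).range)
    (hbx : b • x ∈ Algebra.adjoin A (Set.range t)) (hxp : x ^ p ∈ Algebra.adjoin A (Set.range t)) :
    x ∈ almostElements q (Algebra.adjoin A (Set.range t)).toSubmodule := by
  refine mem_almostElements_of_forall_succ (expChar_ne_zero (A ⧸ Ideal.span {a}) p) hq fun k ↦ ?_
  obtain ⟨m, F, hF, hLF⟩ :=
    ht.exists_map_dvd_map_frobeniusMod (fun n P ↦ (hL n P).1) hbx hxp (by rw [_root_.smul_pow, hba])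
  rw [← hLφ] at hLF
  obtain ⟨D, E, hDE⟩ := exists_C_mul_eq_mul_add_C_mul (c := q (k + 1))
    (fun c hc ↦ hroot c (frobeniusMod_eq_zero_iff.1 hc))
    (fun r ↦ by rw [frobeniusMod_apply, hq]; exact hsurj k r) hLF
  apply_fun aeval (t (m + 1)) at hDE
  rw [map_add, map_mul, map_mul, map_mul, (hL _ _).2 dvd_rfl, zero_mul, zero_add, aeval_C, aeval_C,
    hF, ← Algebra.smul_def, ← Algebra.smul_def, smul_comm] at hDE
  rw [hb hDE]
  exact aeval_mem_adjoin_range E (m + 1)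

end Tower

end Polynomial

section RiemannExtension

open Polynomial

variable {A B : Type*} [CommRing A] [CommRing B] [Algebra A B] {p j : ℕ} {w v : ℕ → A} {t : ℕ → B}
  {x : B}

theorem isRegular_of_isUnit_algebraMap (hinj : Function.Injective (algebraMap A B)) {a : A}
    (ha : IsUnit (algebraMap A B a)) : IsRegular a :=
  isLeftRegular_iff_isRegular.1 fun b c hbc ↦
    hinj (ha.mul_left_cancel (by simpa only [map_mul] using congrArg (algebraMap A B) hbc))

theorem isPowRootSystem_of_smul_eq (hp : p ≠ 0) (hw : IsPowRootSystem p w)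
    (hv : IsPowRootSystem p v) (hv0 : IsUnit (algebraMap A B (v 0)))
    (hvt : ∀ n, v n • t n = algebraMap A B (w n ^ j)) : IsPowRootSystem p t := by
  have hvB := (hv.map (algebraMap A B)).isUnit hp hv0
  refine fun n ↦ (hvB n).mul_left_cancel ?_
  rw [← Algebra.smul_def, ← Algebra.smul_def, hvt, ← hv, ← _root_.smul_pow, hvt, ← map_pow,
    pow_right_comm, hw]

theorem isPowerBounded_of_mem_adjoin_range (hp : p ≠ 0) (hw : IsPowRootSystem p w)
    (ht : IsPowRootSystem p t) (hvt : ∀ n, v n • t n = algebraMap A B (w n ^ j))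
    (hx : x ∈ Algebra.adjoin A (Set.range t)) :
    IsPowerBounded (w 0) (Algebra.adjoin A {t 0}) x := by
  refine ⟨j, fun k ↦ ?_⟩
  obtain ⟨n, hn⟩ := ht.mem_adjoin_range_iff.1 (pow_mem hx k)
  have := pow_smul_mem_adjoin_pow (hvt n) (pow_ne_zero n hp) hn
  rwa [pow_right_comm, hw.pow_pow_eq_zero, ht.pow_pow_eq_zero] at this

theorem mem_almostElements_adjoin_range_of_smul_mem (hp : p.Prime)
    (hinj : Function.Injective (algebraMap A B)) (hw : IsPowRootSystem p w)
    (hv : IsPowRootSystem p v) (ht : IsPowRootSystem p t)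
    (hvt : ∀ n, v n • t n = algebraMap A B (w n ^ j)) (hw0 : IsUnit (algebraMap A B (w 0)))
    (hwp : w 0 ∣ (p : A)) (hroot : ∀ a, w 0 ∣ a ^ p → w 1 ∣ a)
    (hsurj : ∀ a n, 0 < n → ∃ b, w 0 ∣ w n * v n * a - b ^ p)
    (hreg : IsSMulRegular (A ⧸ Ideal.span {w 0}) (v 0))
    (hwx : w 1 • x ∈ Algebra.adjoin A (Set.range t))
    (hxp : x ^ p ∈ Algebra.adjoin A (Set.range t)) :
    x ∈ almostElements (fun n ↦ w n * v n) (Algebra.adjoin A (Set.range t)).toSubmodule := by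
  have hwB := (hw.map (algebraMap A B)).isUnit hp.ne_zero hw0
  by_cases hw0u : IsUnit (w 0)
  · have hw1u := hw.isUnit hp.ne_zero hw0u 1
    exact le_almostElements ((Submodule.smul_mem_iff_of_isUnit _ hw1u).1 hwx)
  have := expChar_quotient_span_singleton hp hwp hw0u
  have hw0A : IsLeftRegular (w 0) := (isRegular_of_isUnit_algebraMap hinj hw0).left
  have htu (n : ℕ) : IsUnit (t n) := by
    have := (hwB n).pow j
    rw [← map_pow, ← hvt, Algebra.smul_def] at this
    exact isUnit_of_mul_isUnit_right this
  refine ht.mem_almostElements_of_smul_mem_of_pow_mem (a := w 0) (b := w 1)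
    (L := fun n ↦ C (v n) * X - C (w n ^ j)) (hw.mul hv) (fun n P ↦ ?_) (fun n ↦ ?_) (hw 0) ?_
    hroot (fun n r ↦ ?_) hwx hxp
  · exact aeval_eq_zero_iff_C_mul_X_sub_C_dvd hinj (htu n).isRegular.left (hvt n)
      (hw.isSMulRegular_quotient_span_pow hp.ne_zero hv hw0A hreg j n)
  · simp [frobeniusMod_apply, hv n, hw n]
  · exact (isSMulRegular_algebraMap_iff B).1 (hwB 1).isRegular.left
  · obtain ⟨a, rfl⟩ := Ideal.Quotient.mk_surjective r
    rcases n.eq_zero_or_pos with rfl | hn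
    · simp
    · obtain ⟨b, hb⟩ := hsurj a n hn
      refine ⟨b, ?_⟩
      rw [frobeniusMod_apply, ← map_mul, eq_comm, Ideal.Quotient.mk_eq_mk_iff_sub_mem,
        Ideal.mem_span_singleton]
      exact hb

theorem IsPowerBounded.mem_almostElements_adjoin_range (hp : p.Prime)
    (hinj : Function.Injective (algebraMap A B)) (hw : IsPowRootSystem p w)
    (hv : IsPowRootSystem p v) (ht : IsPowRootSystem p t)
    (hvt : ∀ n, v n • t n = algebraMap A B (w n ^ j)) (hw0 : IsUnit (algebraMap A B (w 0)))
    (hwp : w 0 ∣ (p : A)) (hroot : ∀ a, w 0 ∣ a ^ p → w 1 ∣ a)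
    (hsurj : ∀ a n, 0 < n → ∃ b, w 0 ∣ w n * v n * a - b ^ p)
    (hreg : IsSMulRegular (A ⧸ Ideal.span {w 0}) (v 0))
    (hx : IsPowerBounded (w 0) (Algebra.adjoin A {t 0}) x) :
    x ∈ almostElements (fun n ↦ w n * v n) (Algebra.adjoin A (Set.range t)).toSubmodule := by
  have hle : Algebra.adjoin A {t 0} ≤ Algebra.adjoin A (Set.range t) :=
    Algebra.adjoin_mono (Set.singleton_subset_iff.2 (Set.mem_range_self 0))
  exact (hx.mono hle).mem_almostElements hp.two_le (hw.mul hv) hw (fun n ↦ dvd_mul_right _ _)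
    fun y ↦ mem_almostElements_adjoin_range_of_smul_mem hp hinj hw hv ht hvt hw0 hwp hroot hsurj
      hreg

end RiemannExtension

section IntegrallyClosed

variable {A B : Type*} [CommRing A] [CommRing B] [Algebra A B]

theorem dvd_of_pow_dvd_pow_of_isUnit_algebraMap [IsIntegrallyClosedIn A B] {a b : A}
    (ha : IsUnit (algebraMap A B a)) {n : ℕ} (hn : 0 < n) (h : a ^ n ∣ b ^ n) : a ∣ b := by
  obtain ⟨c, hc⟩ := h
  obtain ⟨x, hx⟩ := ha.dvd (a := algebraMap A B b)
  have hxn : x ^ n = algebraMap A B c := by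
    refine (ha.pow n).mul_left_cancel ?_
    rw [← mul_pow, ← hx, ← map_pow, ← map_pow, ← map_mul, hc]
  obtain ⟨y, rfl⟩ := IsIntegrallyClosedIn.exists_algebraMap_eq_of_isIntegral_pow (R := A) hn
    (hxn ▸ isIntegral_algebraMap)
  exact ⟨y, IsIntegralClosure.algebraMap_injective A A B (by rw [hx, map_mul])⟩

theorem IsCompletelyIntegrallyClosedIn.isIntegrallyClosedIn
    (h : IsCompletelyIntegrallyClosedIn A B) (hinj : Function.Injective (algebraMap A B)) :
    IsIntegrallyClosedIn A B :=
  isIntegrallyClosedIn_iff.2 ⟨hinj, fun {x} hx ↦ h x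
    ⟨(Algebra.adjoin A {x}).toSubmodule, hx.fg_adjoin_singleton,
      fun n ↦ Subalgebra.pow_mem _ (Algebra.self_mem_adjoin_singleton A x) n⟩⟩

end IntegrallyClosed

theorem wittPerfectRiemannExtension_almost_iso_general {p : ℕ} (hp : p.Prime) {A : Type*}
    [CommRing A] {π : A} (hπp : π ∣ p) {g : A} (hg : g ∈ nonZeroDivisors A) {w v : ℕ → A}
    (hw0 : w 0 = π) (hw : IsPowRootSystem p w) (hv0 : v 0 = g) (hv : IsPowRootSystem p v)
    (Aπ : Type*) [CommRing Aπ] [Algebra A Aπ] [IsLocalization.Away π Aπ] [IsIntegrallyClosedIn A Aπ]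
    (hsurj : ∀ a n, 0 < n → ∃ b, π ∣ w n * v n * a - b ^ p)
    (hreg : IsSMulRegular (A ⧸ Ideal.span {π}) g) {B : Type*} [CommRing B] [Algebra A B]
    [IsLocalization.Away (π * g) B] {j : ℕ} {t : ℕ → B}
    (hvt : ∀ n, v n • t n = algebraMap A B (w n ^ j)) :
    (∀ x ∈ Algebra.adjoin A (Set.range t), IsPowerBounded π (Algebra.adjoin A {t 0}) x) ∧
      ∀ x, IsPowerBounded π (Algebra.adjoin A {t 0}) x →
        x ∈ almostElements (fun n ↦ w n * v n) (Algebra.adjoin A (Set.range t)).toSubmodule := by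
  subst hw0 hv0
  have hw0Aπ : IsUnit (algebraMap A Aπ (w 0)) := IsLocalization.Away.algebraMap_isUnit (w 0)
  have hw0A : w 0 ∈ nonZeroDivisors A := isRegular_iff_mem_nonZeroDivisors.1 <|
    isRegular_of_isUnit_algebraMap (IsIntegralClosure.algebraMap_injective A A Aπ) hw0Aπ
  have hinj : Function.Injective (algebraMap A B) :=
    IsLocalization.injective B (Submonoid.powers_le.2 (mul_mem hw0A hg))
  obtain ⟨hw0B, hv0B⟩ : IsUnit (algebraMap A B (w 0)) ∧ IsUnit (algebraMap A B (v 0)) := by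
    rw [← IsUnit.mul_iff, ← map_mul]
    exact IsLocalization.Away.algebraMap_isUnit _
  have hroot (a : A) (ha : w 0 ∣ a ^ p) : w 1 ∣ a := by
    have hw1Aπ := (hw.map (algebraMap A Aπ)).isUnit hp.ne_zero hw0Aπ 1
    exact dvd_of_pow_dvd_pow_of_isUnit_algebraMap hw1Aπ hp.pos (by rwa [hw 0])
  have ht := isPowRootSystem_of_smul_eq hp.ne_zero hw hv hv0B hvt
  exact ⟨fun x hx ↦ isPowerBounded_of_mem_adjoin_range hp.ne_zero hw ht hvt hx,
    fun x hx ↦ hx.mem_almostElements_adjoin_range hp hinj hw hv ht hvt hw0B hπp hroot hsurj hreg⟩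

/-- **Witt-perfect Riemann extension theorem, part (a).**  Under the hypotheses
of Theorem 4.7 of Nakazato–Shimomoto, for each `j > 0` the inclusion
`A[(p^j/g)^{1/p^∞}] ⊆ A^{j∘}` is a `(pg)^{1/p^∞}`-almost isomorphism, where `A^{j∘}` is the
complete integral closure of `A[p^j/g]` in `A[1/(pg)]` with respect to powers of `p`. -/
theorem wittPerfectRiemannExtension_almost_iso.{u}
    (p : ℕ) (hp : p.Prime)
    (V : Type u) [CommRing V] [IsDomain V] [ValuationRing V]
    (hVdim : ringKrullDim V = 1)
    (hVtf : (p : V) ∈ nonZeroDivisors V)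
    (hVW : IsWittPerfect p V)
    (prV : ℕ → V) (hprV0 : prV 0 = (p : V)) (hprV : ∀ n, prV (n + 1) ^ p = prV n)
    (A : Type u) [CommRing A] [Algebra V A] [Module.Flat V A]
    (hAtf : (p : A) ∈ nonZeroDivisors A)
    (g : A) (hg : g ∈ nonZeroDivisors A)
    (gr : ℕ → A) (hgr0 : gr 0 = g) (hgr : ∀ n, gr (n + 1) ^ p = gr n)
    -- (1) A is p-adically Zariskian and completely integrally closed in A[1/p]
    (hZar : (p : A) ∈ (⊥ : Ideal A).jacobson)
    (Ap : Type u) [CommRing Ap] [Algebra A Ap] [IsLocalization.Away (p : A) Ap]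
    (hcic : IsCompletelyIntegrallyClosedIn A Ap)
    -- (2) A is (pg)^{1/p^∞}-almost Witt-perfect and integral over a Noetherian subring
    (hAWP : IsAlmostWittPerfect p (fun n => algebraMap V A (prV n) * gr n))
    (hNoeth : ∃ R : Subring A, IsNoetherianRing ↥R ∧ ∀ x : A, IsIntegral ↥R x)
    -- (3) (p, g) is a regular sequence on A
    (hreg : ∀ x : A, g * x ∈ Ideal.span {(p : A)} → x ∈ Ideal.span {(p : A)})
    -- the localization A[1/(pg)] and the inverses of the p-power roots of g in it
    (Apg : Type u) [CommRing Apg] [Algebra A Apg] [IsLocalization.Away ((p : A) * g) Apg]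
    (ginv : ℕ → Apg) (hginv : ∀ n, ginv n * algebraMap A Apg (gr n) = 1) :
    ∀ j : ℕ, 0 < j →
      -- A[(p^j/g)^{1/p^∞}] ⊆ A^{j∘}
      ((Algebra.adjoin A
          (Set.range fun n : ℕ =>
            (algebraMap A Apg (algebraMap V A (prV n))) ^ j * ginv n) : Subalgebra A Apg) : Set Apg)
        ⊆ {x : Apg | ∃ m : ℕ, ∀ n : ℕ,
              (algebraMap A Apg (p : A)) ^ m * x ^ n ∈
                Algebra.adjoin A {(algebraMap A Apg (p : A)) ^ j * ginv 0}} ∧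
      -- (pg)^{1/p^n} · A^{j∘} ⊆ A[(p^j/g)^{1/p^∞}] for every n > 0
      (∀ n : ℕ, 0 < n →
        ∀ x ∈ {x : Apg | ∃ m : ℕ, ∀ k : ℕ,
              (algebraMap A Apg (p : A)) ^ m * x ^ k ∈
                Algebra.adjoin A {(algebraMap A Apg (p : A)) ^ j * ginv 0}},
          algebraMap A Apg (algebraMap V A (prV n) * gr n) * x ∈
            Algebra.adjoin A
              (Set.range fun n : ℕ =>
                (algebraMap A Apg (algebraMap V A (prV n))) ^ j * ginv n)) := by
  intro j _
  have hw : IsPowRootSystem p fun n ↦ algebraMap V A (prV n) :=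
    IsPowRootSystem.map hprV (algebraMap V A)
  have : IsIntegrallyClosedIn A Ap :=
    hcic.isIntegrallyClosedIn (IsLocalization.injective Ap (Submonoid.powers_le.2 hAtf))
  obtain ⟨hpow, halmost⟩ := wittPerfectRiemannExtension_almost_iso_general hp (B := Apg) (j := j)
    (t := fun n ↦ algebraMap A Apg (algebraMap V A (prV n)) ^ j * ginv n) dvd_rfl hg
    (by simp [hprV0]) hw hgr0 hgr Ap hAWP.1
    (isSMulRegular_quotient_span_singleton_iff.2
      (by simpa only [Ideal.mem_span_singleton] using hreg))
    fun n ↦ by rw [Algebra.smul_def, mul_comm, mul_assoc, hginv, mul_one, map_pow]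
  simp only [IsPowerBounded, mem_almostElements, Algebra.smul_def, map_pow, hprV0,
    map_natCast] at hpow halmost ⊢
  exact ⟨hpow, fun n _ x hx ↦ halmost x hx n⟩
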